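/- arXiv:2112.11794 — 2 statements merged into one kernel-verified Lean document; each statement's English description precedes it below -/
import Mathlib

section
/- Let f and g be symmetric simple-loop symbols of class SL^α with α ≥ 2, and for each n set h = 1/(n+1) (so that f + h^h·g and f + g are again symmetric simple-loop symbols). Then there exist a constant C > 0 and N ∈ ℕ such that for all n ≥ N and all s ∈ (0,π): |η_{f+h^h·g}(s) − η_{f+g}(s) − φ(s)·h·log h| ≤ C h² (log h)². -/
open MeasureTheory Filter Real Topology

noncomputable section

/-- The `k`-th Fourier coefficient of a (2π-periodic) function `u : ℝ → ℝ`. -/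
def fCoeff (u : ℝ → ℝ) (k : ℤ) : ℂ :=
  (1 / (2 * (π : ℂ))) * ∫ θ in (0:ℝ)..(2*π), (u θ : ℂ) * Complex.exp (-Complex.I * (k : ℂ) * (θ : ℂ))

/-- The `n × n` Toeplitz matrix generated by `u`. -/
def toeplitz (u : ℝ → ℝ) (n : ℕ) : Matrix (Fin n) (Fin n) ℂ :=
  Matrix.of fun i j => fCoeff u ((i : ℤ) - (j : ℤ))

/-- The eigenvalues of a Hermitian matrix, arranged in nondecreasing order. -/
def sortedEigs {n : ℕ} {A : Matrix (Fin n) (Fin n) ℂ} (hA : A.IsHermitian) : Fin n → ℝ :=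
  hA.eigenvalues ∘ Tuple.sort hA.eigenvalues

/-- Cauchy principal value of `∫_0^{2π} u`, where `u` is singular (only) at `s` and `2π - s`. -/
def pvIntegral2 (u : ℝ → ℝ) (s : ℝ) : ℝ :=
  limUnder (𝓝[>] (0:ℝ)) fun ε =>
    ∫ σ in Set.Icc (0:ℝ) (2*π) \ (Set.Ioo (s-ε) (s+ε) ∪ Set.Ioo (2*π-s-ε) (2*π-s+ε)), u σ

/-- The function `b_f(σ,s) = (f(σ) - f(s))/(2(cos s - cos σ))`, extended by continuity to the
points where `cos σ = cos s`. -/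
def bSymb (f : ℝ → ℝ) (σ s : ℝ) : ℝ :=
  if Real.cos σ = Real.cos s then
    limUnder (𝓝[≠] σ) fun τ => (f τ - f s) / (2 * (Real.cos s - Real.cos τ))
  else (f σ - f s) / (2 * (Real.cos s - Real.cos σ))

/-- The function `η_f`. -/
def etaF (f : ℝ → ℝ) (s : ℝ) : ℝ :=
  (Real.sin s / (2*π)) *
    pvIntegral2 (fun σ => Real.log (bSymb f σ s) / (Real.cos s - Real.cos σ)) s

/-- The function `ψ` associated with symbols `f` and `g`. -/
def psiF (f g : ℝ → ℝ) (s : ℝ) : ℝ :=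
  (Real.sin s / (2*π)) *
    pvIntegral2 (fun σ => bSymb g σ s / (bSymb f σ s * (Real.cos s - Real.cos σ))) s

/-- The function `φ` associated with symbols `f` and `g`. -/
def phiF (f g : ℝ → ℝ) (s : ℝ) : ℝ :=
  (Real.sin s / (2*π)) *
    pvIntegral2
      (fun σ => bSymb g σ s / ((bSymb f σ s + bSymb g σ s) * (Real.cos s - Real.cos σ))) s

/-- A symmetric simple-loop symbol of class `SL^α`. -/
structure IsSimpleLoop (α : ℝ) (f : ℝ → ℝ) : Prop where
  periodic : Function.Periodic f (2*π)
  smooth : ContDiff ℝ 2 f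
  wiener : Summable fun k : ℤ => ‖fCoeff f k‖ * ((k.natAbs : ℝ) + 1) ^ α
  symm : ∀ s, f (2*π - s) = f s
  f_zero : f 0 = 0
  deriv_zero : deriv f 0 = 0
  deriv2_zero : 0 < deriv (deriv f) 0
  deriv_pos : ∀ σ ∈ Set.Ioo (0:ℝ) π, 0 < deriv f σ
  deriv_pi : deriv f π = 0
  deriv2_pi : deriv (deriv f) π < 0
  f_pi : 0 < f π

end

open Set

/-!
By Cauchy's mean value theorem `b_w(σ, s) = w'(ξ) / (2 sin ξ)` and
`r := b_g / b_{f+g} = g'(ξ) / (f + g)'(ξ)`, each with some `ξ` between `s` and `σ`. The logarithm of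
the first and the second are, as functions of `ξ`, Lipschitz for the hyperbolic metric `dx / sin x`
on `(0, π)`. In the coordinates `σ = gd y`, `s = gd t`, isometric for that metric, the kernel
`sin s dσ / (cos s - cos σ)` becomes `dy / sinh (y - t)`. The kernel alone has principal value zero,
so the value at `s` may be subtracted, and the transform of any mean value of an `M`-Lipschitz
function is at most `(M / π) ∫ |v / sinh v| dv`, uniformly in `s`.

Now `log b_{f + e^L g} = log b_{f+g} + L r + R_L(r)` with `|R_L'| ≤ 9 L²` on `[0, 1]`. The first two
terms transform to `η_{f+g}` and `L φ`, and the last one to `O(L²)`; the expansion is the case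
`L = h log h`.
-/

/-! ### Hyperbolic geometry of `(0, π)` -/

/-- The (shifted) Gudermannian function, an isometry from `ℝ` onto the interval `(0, π)` with the
hyperbolic metric `dx / sin x`. -/
noncomputable def gd (y : ℝ) : ℝ :=
  2 * arctan (exp y)

lemma sin_gd (y : ℝ) : sin (gd y) = (cosh y)⁻¹ := by
  have hsq : √(1 + exp y ^ 2) ^ 2 = 1 + exp y ^ 2 := sq_sqrt (by positivity)
  rw [gd, sin_two_mul, sin_arctan, cos_arctan, cosh_eq, exp_neg]
  field_simp
  rw [hsq]
  ring

lemma cos_gd (y : ℝ) : cos (gd y) = -tanh y := by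
  rw [gd, cos_two_mul, cos_sq_arctan, tanh_eq_sinh_div_cosh, sinh_eq, cosh_eq, exp_neg]
  field_simp
  ring

lemma gd_mem_Ioo (y : ℝ) : gd y ∈ Ioo 0 π := by
  have hpos : 0 < arctan (exp y) := arctan_pos.2 (exp_pos y)
  have hlt := arctan_lt_pi_div_two (exp y)
  constructor <;> unfold gd <;> linarith

lemma range_gd : range gd = Ioo 0 π := by
  refine Subset.antisymm (range_subset_iff.2 gd_mem_Ioo) fun x hx => ?_
  have htan : 0 < tan (x / 2) := tan_pos_of_pos_of_lt_pi_div_two (by linarith [hx.1])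
    (by linarith [hx.2])
  refine ⟨log (tan (x / 2)), ?_⟩
  rw [gd, exp_log htan, arctan_tan (by linarith [hx.1, pi_pos]) (by linarith [hx.2])]
  ring

lemma hasDerivAt_gd (y : ℝ) : HasDerivAt gd (sin (gd y)) y := by
  refine ((hasDerivAt_exp y).arctan.const_mul 2).congr_deriv ?_
  rw [sin_gd, cosh_eq, exp_neg]
  field_simp
  ring

lemma strictMono_gd : StrictMono gd := fun _ _ hxy =>
  mul_lt_mul_of_pos_left (arctan_strictMono (exp_lt_exp.2 hxy)) two_pos

lemma cos_gd_sub_cos_gd (t y : ℝ) :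
    cos (gd t) - cos (gd y) = sinh (y - t) * (sin (gd t) * sin (gd y)) := by
  rw [cos_gd, cos_gd, sin_gd, sin_gd, tanh_eq_sinh_div_cosh, tanh_eq_sinh_div_cosh, sinh_sub]
  field_simp
  ring

lemma self_mul_one_add_sq_le_sinh {v : ℝ} (hv : 0 ≤ v) : v * (1 + v ^ 2 / 8) ≤ sinh v := by
  have hhalf : v / 2 ≤ sinh (v / 2) := self_le_sinh_iff.2 (by positivity)
  have hquarter : v / 4 ≤ sinh (v / 4) := self_le_sinh_iff.2 (by positivity)
  have hcosh : 1 + v ^ 2 / 8 ≤ cosh (v / 2) := by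
    rw [show v / 2 = 2 * (v / 4) by ring, cosh_two_mul, cosh_sq]
    nlinarith
  calc v * (1 + v ^ 2 / 8) = 2 * (v / 2) * (1 + v ^ 2 / 8) := by ring
    _ ≤ 2 * sinh (v / 2) * cosh (v / 2) := by gcongr
    _ = sinh v := by rw [← sinh_two_mul]; ring_nf

lemma abs_div_sinh_le (v : ℝ) : |v / sinh v| ≤ 8 * (1 + v ^ 2)⁻¹ := by
  rcases eq_or_ne v 0 with rfl | hv
  · simp
  have hv0 : 0 < |v| := abs_pos.2 hv
  calc |v / sinh v| = |v| / sinh |v| := by rw [abs_div, abs_sinh]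
    _ ≤ |v| / (|v| * (1 + |v| ^ 2 / 8)) := by
        gcongr
        exact self_mul_one_add_sq_le_sinh hv0.le
    _ = 8 * (8 + v ^ 2)⁻¹ := by rw [sq_abs]; field_simp
    _ ≤ 8 * (1 + v ^ 2)⁻¹ := by gcongr; norm_num

lemma integrable_div_sinh : Integrable fun v : ℝ => v / sinh v :=
  (integrable_inv_one_add_sq.const_mul 8).mono'
    (measurable_id.div continuous_sinh.measurable).aestronglyMeasurable
    (Eventually.of_forall abs_div_sinh_le)

/-- `Φ` is `M`-Lipschitz on `(0, π)` for the hyperbolic metric `dx / sin x`, in differential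
form. -/
def IsSinLipschitz (M : ℝ) (Φ : ℝ → ℝ) : Prop :=
  ∀ x ∈ Ioo 0 π, ∃ d, HasDerivAt Φ d x ∧ |d| * sin x ≤ M

lemma IsSinLipschitz.nonneg {M : ℝ} {Φ : ℝ → ℝ} (hΦ : IsSinLipschitz M Φ) : 0 ≤ M := by
  obtain ⟨d, -, hd⟩ := hΦ (gd 0) (gd_mem_Ioo 0)
  exact (mul_nonneg (abs_nonneg d) (sin_pos_of_mem_Ioo (gd_mem_Ioo 0)).le).trans hd

lemma IsSinLipschitz.comp {A M : ℝ} {H Φ : ℝ → ℝ} {I : Set ℝ} (hΦ : IsSinLipschitz M Φ)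
    (hmaps : MapsTo Φ (Ioo 0 π) I) (hH : ∀ y ∈ I, ∃ d, HasDerivAt H d y ∧ |d| ≤ A) :
    IsSinLipschitz (A * M) (H ∘ Φ) := by
  intro x hx
  obtain ⟨d, hd, hdM⟩ := hΦ x hx
  obtain ⟨e, he, heA⟩ := hH (Φ x) (hmaps hx)
  refine ⟨e * d, he.comp x hd, ?_⟩
  have hsin := sin_pos_of_mem_Ioo hx
  rw [abs_mul, mul_assoc]
  gcongr
  exact (abs_nonneg e).trans heA

lemma IsSinLipschitz.abs_sub_le {M : ℝ} {Φ : ℝ → ℝ} (hΦ : IsSinLipschitz M Φ) (t y : ℝ) :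
    |Φ (gd y) - Φ (gd t)| ≤ M * |y - t| := by
  choose! Φ' hderiv hbound using hΦ
  refine convex_univ.norm_image_sub_le_of_norm_hasDerivWithin_le (f := Φ ∘ gd)
    (fun z _ => ((hderiv _ (gd_mem_Ioo z)).comp z (hasDerivAt_gd z)).hasDerivWithinAt)
    (fun z _ => ?_) (mem_univ t) (mem_univ y)
  rw [norm_eq_abs, abs_mul, abs_of_pos (sin_pos_of_mem_Ioo (gd_mem_Ioo z))]
  exact hbound _ (gd_mem_Ioo z)

/-! ### Mean values and divided differences -/

/-- `F` models a divided difference with base point `s`: on `[0, π]` the value `F σ` is attained by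
`Φ` strictly between `s` and `σ`, and `F` is continued to `[π, 2π]` by reflection. -/
structure IsMeanValue (F Φ : ℝ → ℝ) (s : ℝ) : Prop where
  measurable : Measurable F
  symm : ∀ σ, F (2 * π - σ) = F σ
  mem_image : ∀ σ ∈ Icc 0 π, σ ≠ s → F σ ∈ Φ '' uIoo s σ

lemma uIoo_subset_Ioo_zero_pi {s σ : ℝ} (hs : s ∈ Ioo 0 π) (hσ : σ ∈ Icc 0 π) :
    uIoo s σ ⊆ Ioo 0 π :=
  Ioo_subset_Ioo (le_min hs.1.le hσ.1) (max_le hs.2.le hσ.2)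

lemma IsMeanValue.comp {F Φ H : ℝ → ℝ} {s : ℝ} (hF : IsMeanValue F Φ s) (hH : Measurable H) :
    IsMeanValue (H ∘ F) (H ∘ Φ) s where
  measurable := hH.comp hF.measurable
  symm σ := congrArg H (hF.symm σ)
  mem_image σ hσ hne := by
    rw [image_comp]
    exact mem_image_of_mem H (hF.mem_image σ hσ hne)

lemma IsMeanValue.mem_image_Ioo {F Φ : ℝ → ℝ} {s σ : ℝ} (hF : IsMeanValue F Φ s)
    (hs : s ∈ Ioo 0 π) (hσ : σ ∈ Icc 0 (2 * π)) (hcos : cos σ ≠ cos s) : F σ ∈ Φ '' Ioo 0 π := by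
  have hleft : ∀ τ ∈ Icc 0 π, τ ≠ s → F τ ∈ Φ '' Ioo 0 π := fun τ hτ hne =>
    image_mono (uIoo_subset_Ioo_zero_pi hs hτ) (hF.mem_image τ hτ hne)
  rcases le_total σ π with hle | hge
  · exact hleft σ ⟨hσ.1, hle⟩ (ne_of_apply_ne cos hcos)
  · rw [← hF.symm σ]
    refine hleft _ ⟨by linarith [hσ.2], by linarith⟩ (ne_of_apply_ne cos ?_)
    rwa [cos_two_pi_sub]

/-- The ratio of the increments of `p` and `q` between `s` and `σ`. Both `b_f(σ, s)` (with
`q = -2 cos`) and `b_g(σ, s) / b_f(σ, s)` (with `q = f`) are of this form. -/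
noncomputable def slopeRatio (p q : ℝ → ℝ) (s σ : ℝ) : ℝ :=
  (p σ - p s) / (q σ - q s)

lemma exists_slopeRatio_eq_of_lt {p q : ℝ → ℝ} {a b : ℝ} (hp : Differentiable ℝ p)
    (hq : Differentiable ℝ q) (hab : a < b) (hq' : ∀ ξ ∈ Ioo a b, deriv q ξ ≠ 0) :
    ∃ ξ ∈ Ioo a b, slopeRatio p q a b = deriv p ξ / deriv q ξ := by
  have hne : q b - q a ≠ 0 := fun h => by
    obtain ⟨ξ, hξ, h0⟩ := exists_deriv_eq_zero hab hq.continuous.continuousOn (by linarith)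
    exact hq' ξ hξ h0
  obtain ⟨ξ, hξ, h⟩ := exists_ratio_deriv_eq_ratio_slope p hab hp.continuous.continuousOn
    hp.differentiableOn q hq.continuous.continuousOn hq.differentiableOn
  refine ⟨ξ, hξ, ?_⟩
  rw [slopeRatio, div_eq_div_iff hne (hq' ξ hξ)]
  linarith

lemma slopeRatio_comm (p q : ℝ → ℝ) (s σ : ℝ) : slopeRatio p q s σ = slopeRatio p q σ s := by
  rw [slopeRatio, ← neg_div_neg_eq, neg_sub, neg_sub, slopeRatio]

lemma exists_slopeRatio_eq {p q : ℝ → ℝ} {s σ : ℝ} (hp : Differentiable ℝ p)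
    (hq : Differentiable ℝ q) (hne : σ ≠ s) (hq' : ∀ ξ ∈ uIoo s σ, deriv q ξ ≠ 0) :
    ∃ ξ ∈ uIoo s σ, slopeRatio p q s σ = deriv p ξ / deriv q ξ := by
  rcases hne.lt_or_gt with hlt | hlt
  · rw [uIoo_of_gt hlt] at hq' ⊢
    rw [slopeRatio_comm]
    exact exists_slopeRatio_eq_of_lt hp hq hlt hq'
  · rw [uIoo_of_lt hlt] at hq' ⊢
    exact exists_slopeRatio_eq_of_lt hp hq hlt hq'

lemma isMeanValue_slopeRatio {p q : ℝ → ℝ} {s : ℝ} (hp : Differentiable ℝ p)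
    (hq : Differentiable ℝ q) (hpsymm : ∀ σ, p (2 * π - σ) = p σ)
    (hqsymm : ∀ σ, q (2 * π - σ) = q σ) (hq' : ∀ ξ ∈ Ioo 0 π, deriv q ξ ≠ 0)
    (hs : s ∈ Ioo 0 π) :
    IsMeanValue (slopeRatio p q s) (fun ξ => deriv p ξ / deriv q ξ) s where
  measurable := (hp.continuous.measurable.sub_const _).div (hq.continuous.measurable.sub_const _)
  symm σ := by rw [slopeRatio, hpsymm, hqsymm, slopeRatio]
  mem_image σ hσ hne := by
    obtain ⟨ξ, hξ, h⟩ := exists_slopeRatio_eq hp hq hne fun ξ hξ =>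
      hq' ξ (uIoo_subset_Ioo_zero_pi hs hσ hξ)
    exact ⟨ξ, hξ, h.symm⟩

lemma bSymb_eq_slopeRatio (w : ℝ → ℝ) {s σ : ℝ} (hcos : cos σ ≠ cos s) :
    bSymb w σ s = slopeRatio w (fun x => -2 * cos x) s σ := by
  rw [bSymb, if_neg hcos, slopeRatio]
  ring_nf

lemma slopeRatio_add_const_mul {f g q : ℝ → ℝ} (c : ℝ) {s σ : ℝ}
    (hne : slopeRatio (fun x => f x + g x) q s σ ≠ 0) :
    slopeRatio (fun x => f x + c * g x) q s σ = slopeRatio (fun x => f x + g x) q s σ *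
      (1 + (c - 1) * slopeRatio g (fun x => f x + g x) s σ) := by
  obtain ⟨hnum, hden⟩ := div_ne_zero_iff.1 hne
  simp only [slopeRatio]
  field_simp
  ring

/-! ### Principal values -/

/-- The domain of integration `[0, 2π]` with the `ε`-neighbourhoods of `s` and `2π - s` removed. -/
def pvDomain (s ε : ℝ) : Set ℝ :=
  Icc 0 (2 * π) \ (Ioo (s - ε) (s + ε) ∪ Ioo (2 * π - s - ε) (2 * π - s + ε))

lemma measurableSet_pvDomain (s ε : ℝ) : MeasurableSet (pvDomain s ε) :=
  measurableSet_Icc.diff (measurableSet_Ioo.union measurableSet_Ioo)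

lemma pvDomain_subset (s ε : ℝ) : pvDomain s ε ⊆ Icc 0 (2 * π) :=
  sdiff_subset

lemma pvDomain_eq_union {s ε : ℝ} (hs : s ∈ Ioo 0 π) (hε : 0 < ε) :
    pvDomain s ε =
      Icc 0 (s - ε) ∪ (Icc (s + ε) (2 * π - s - ε) ∪ Icc (2 * π - s + ε) (2 * π)) := by
  obtain ⟨hs0, hsπ⟩ := hs
  ext x
  simp only [pvDomain, Set.mem_sdiff, mem_union, mem_Icc, mem_Ioo]
  grind

lemma eventually_mem_pvDomain {s σ : ℝ} (hσ : σ ∈ Icc 0 (2 * π)) (hs : σ ≠ s)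
    (hs' : σ ≠ 2 * π - s) : ∀ᶠ ε in 𝓝[>] (0 : ℝ), σ ∈ pvDomain s ε := by
  have hpos : 0 < min |σ - s| |σ - (2 * π - s)| :=
    lt_min (abs_pos.2 (sub_ne_zero.2 hs)) (abs_pos.2 (sub_ne_zero.2 hs'))
  filter_upwards [Ioo_mem_nhdsGT hpos] with ε hε
  obtain ⟨h, h'⟩ := lt_min_iff.1 hε.2
  refine ⟨hσ, ?_⟩
  rintro (hmem | hmem)
  · exact h.not_ge (abs_sub_lt_iff.2 ⟨by linarith [hmem.2], by linarith [hmem.1]⟩).le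
  · exact h'.not_ge (abs_sub_lt_iff.2 ⟨by linarith [hmem.2], by linarith [hmem.1]⟩).le

lemma tendsto_setIntegral_pvDomain {u : ℝ → ℝ} (s : ℝ) (hu : IntegrableOn u (Icc 0 (2 * π))) :
    Tendsto (fun ε => ∫ σ in pvDomain s ε, u σ) (𝓝[>] 0) (𝓝 (∫ σ in Icc 0 (2 * π), u σ)) := by
  have hcover : AECover (volume.restrict (Icc 0 (2 * π))) (𝓝[>] 0) (pvDomain s) := by
    refine ⟨?_, measurableSet_pvDomain s⟩
    rw [ae_restrict_iff' measurableSet_Icc]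
    filter_upwards [(toFinite {s, 2 * π - s}).countable.ae_notMem volume] with σ hσ hmem
    simp only [mem_insert_iff, mem_singleton_iff, not_or] at hσ
    exact eventually_mem_pvDomain hmem hσ.1 hσ.2
  refine (hcover.integral_tendsto_of_countably_generated hu).congr fun ε => ?_
  rw [Measure.restrict_restrict (measurableSet_pvDomain s ε),
    inter_eq_self_of_subset_left (pvDomain_subset s ε)]

lemma cos_ne_cos {s σ : ℝ} (hs : s ∈ Ioo 0 π) (hσ : σ ∈ Icc 0 (2 * π)) (hne : σ ≠ s)
    (hne' : σ ≠ 2 * π - s) : cos σ ≠ cos s := by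
  rcases le_total σ π with hle | hge
  · exact injOn_cos.ne ⟨hσ.1, hle⟩ ⟨hs.1.le, hs.2.le⟩ hne
  · rw [← cos_two_pi_sub]
    refine injOn_cos.ne ⟨by linarith [hσ.2], by linarith⟩ ⟨hs.1.le, hs.2.le⟩ fun h => hne' ?_
    linarith

/-- A primitive of `σ ↦ 1 / (cos s - cos σ)`; `Real.log` being the logarithm of the absolute value,
it serves on both sides of the singularities. -/
noncomputable def cosKernelPrimitive (s σ : ℝ) : ℝ :=
  (log (sin ((σ - s) / 2)) - log (sin ((σ + s) / 2))) / sin s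

lemma hasDerivAt_cosKernelPrimitive {s σ : ℝ} (hsin : sin s ≠ 0) (hcos : cos σ ≠ cos s) :
    HasDerivAt (cosKernelPrimitive s) (1 / (cos s - cos σ)) σ := by
  have hprod : cos s - cos σ = 2 * sin ((σ + s) / 2) * sin ((σ - s) / 2) := by
    rw [cos_sub_cos, show (s - σ) / 2 = -((σ - s) / 2) by ring, sin_neg, add_comm s σ]
    ring
  have hne : 2 * sin ((σ + s) / 2) * sin ((σ - s) / 2) ≠ 0 := hprod ▸ sub_ne_zero.2 hcos.symm
  have hplus : sin ((σ + s) / 2) ≠ 0 := right_ne_zero_of_mul (left_ne_zero_of_mul hne)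
  have hminus : sin ((σ - s) / 2) ≠ 0 := right_ne_zero_of_mul hne
  have hsub : HasDerivAt (fun x : ℝ => (x - s) / 2) (1 / 2) σ :=
    ((hasDerivAt_id σ).sub_const s).div_const 2
  have hadd : HasDerivAt (fun x : ℝ => (x + s) / 2) (1 / 2) σ :=
    ((hasDerivAt_id σ).add_const s).div_const 2
  have hsplit : sin s =
      sin ((σ + s) / 2) * cos ((σ - s) / 2) - cos ((σ + s) / 2) * sin ((σ - s) / 2) := by
    rw [← sin_sub]
    ring_nf
  refine (((hsub.sin.log hminus).sub (hadd.sin.log hplus)).div_const (sin s)).congr_deriv ?_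
  rw [hprod, div_eq_iff hsin, hsplit]
  field_simp

lemma integral_Icc_inv_cos_sub_cos {s a b : ℝ} (hsin : sin s ≠ 0) (hab : a ≤ b)
    (hcos : ∀ σ ∈ Icc a b, cos σ ≠ cos s) :
    IntegrableOn (fun σ => 1 / (cos s - cos σ)) (Icc a b) ∧
      ∫ σ in Icc a b, 1 / (cos s - cos σ) = cosKernelPrimitive s b - cosKernelPrimitive s a := by
  have hcont : ContinuousOn (fun σ => 1 / (cos s - cos σ)) (Icc a b) :=
    continuousOn_const.div (by fun_prop) fun σ hσ => sub_ne_zero.2 (hcos σ hσ).symm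
  refine ⟨hcont.integrableOn_Icc, ?_⟩
  rw [integral_Icc_eq_integral_Ioc, ← intervalIntegral.integral_of_le hab]
  refine intervalIntegral.integral_eq_sub_of_hasDerivAt (fun σ hσ => ?_)
    (hcont.intervalIntegrable_of_Icc hab)
  rw [uIcc_of_le hab] at hσ
  exact hasDerivAt_cosKernelPrimitive hsin (hcos σ hσ)

lemma cosKernelPrimitive_sum (s ε : ℝ) :
    cosKernelPrimitive s (s - ε) - cosKernelPrimitive s 0 +
        (cosKernelPrimitive s (2 * π - s - ε) - cosKernelPrimitive s (s + ε) +
          (cosKernelPrimitive s (2 * π) - cosKernelPrimitive s (2 * π - s + ε))) =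
      2 * (log (sin (s + ε / 2)) - log (sin (s - ε / 2))) / sin s := by
  simp only [cosKernelPrimitive]
  rw [show (s - ε - s) / 2 = -(ε / 2) by ring, show (s - ε + s) / 2 = s - ε / 2 by ring,
    show (0 - s) / 2 = -(s / 2) by ring, show (0 + s) / 2 = s / 2 by ring,
    show (2 * π - s - ε - s) / 2 = π - (s + ε / 2) by ring,
    show (2 * π - s - ε + s) / 2 = π - ε / 2 by ring,
    show (s + ε - s) / 2 = ε / 2 by ring, show (s + ε + s) / 2 = s + ε / 2 by ring,
    show (2 * π - s) / 2 = π - s / 2 by ring, show (2 * π + s) / 2 = s / 2 + π by ring,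
    show (2 * π - s + ε - s) / 2 = π - (s - ε / 2) by ring,
    show (2 * π - s + ε + s) / 2 = ε / 2 + π by ring]
  simp only [sin_pi_sub, sin_neg, log_neg_eq_log, sin_add_pi]
  ring

lemma integral_pvDomain_inv_cos_sub_cos {s ε : ℝ} (hs : s ∈ Ioo 0 π) (hε : 0 < ε) (hεs : ε < s)
    (hεπ : ε < π - s) :
    IntegrableOn (fun σ => 1 / (cos s - cos σ)) (pvDomain s ε) ∧
      ∫ σ in pvDomain s ε, 1 / (cos s - cos σ) =
        2 * (log (sin (s + ε / 2)) - log (sin (s - ε / 2))) / sin s := by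
  have hsin : sin s ≠ 0 := (sin_pos_of_mem_Ioo hs).ne'
  have hcos : ∀ σ ∈ pvDomain s ε, cos σ ≠ cos s := fun σ hσ =>
    cos_ne_cos hs hσ.1 (by rintro rfl; exact hσ.2 (.inl ⟨by linarith, by linarith⟩))
      (by rintro rfl; exact hσ.2 (.inr ⟨by linarith, by linarith⟩))
  rw [pvDomain_eq_union hs hε] at hcos ⊢
  obtain ⟨hint₁, heq₁⟩ := integral_Icc_inv_cos_sub_cos hsin (by linarith)
    fun σ hσ => hcos σ (.inl hσ)
  obtain ⟨hint₂, heq₂⟩ := integral_Icc_inv_cos_sub_cos hsin (by linarith)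
    fun σ hσ => hcos σ (.inr (.inl hσ))
  obtain ⟨hint₃, heq₃⟩ := integral_Icc_inv_cos_sub_cos hsin (by linarith [hs.1])
    fun σ hσ => hcos σ (.inr (.inr hσ))
  have hdisj₁ : Disjoint (Icc 0 (s - ε))
      (Icc (s + ε) (2 * π - s - ε) ∪ Icc (2 * π - s + ε) (2 * π)) := by
    rw [Set.disjoint_left]
    rintro x hx (hx' | hx') <;> linarith [hx.2, hx'.1]
  have hdisj₂ : Disjoint (Icc (s + ε) (2 * π - s - ε)) (Icc (2 * π - s + ε) (2 * π)) := by
    rw [Set.disjoint_left]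
    intro x hx hx'
    linarith [hx.2, hx'.1]
  refine ⟨hint₁.union (hint₂.union hint₃), ?_⟩
  rw [setIntegral_union hdisj₁ (measurableSet_Icc.union measurableSet_Icc) hint₁
      (hint₂.union hint₃), setIntegral_union hdisj₂ measurableSet_Icc hint₂ hint₃, heq₁, heq₂,
    heq₃, cosKernelPrimitive_sum]

lemma tendsto_integral_pvDomain_inv_cos_sub_cos {s : ℝ} (hs : s ∈ Ioo 0 π) :
    (∀ᶠ ε in 𝓝[>] (0 : ℝ), IntegrableOn (fun σ => 1 / (cos s - cos σ)) (pvDomain s ε)) ∧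
      Tendsto (fun ε => ∫ σ in pvDomain s ε, 1 / (cos s - cos σ)) (𝓝[>] 0) (𝓝 0) := by
  have hsmall : ∀ᶠ ε in 𝓝[>] (0 : ℝ), ε ∈ Ioo 0 (min s (π - s)) :=
    Ioo_mem_nhdsGT (lt_min hs.1 (sub_pos.2 hs.2))
  have heval : ∀ᶠ ε in 𝓝[>] (0 : ℝ),
      IntegrableOn (fun σ => 1 / (cos s - cos σ)) (pvDomain s ε) ∧
        ∫ σ in pvDomain s ε, 1 / (cos s - cos σ) =
          2 * (log (sin (s + ε / 2)) - log (sin (s - ε / 2))) / sin s := by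
    filter_upwards [hsmall] with ε hε
    obtain ⟨hεs, hεπ⟩ := lt_min_iff.1 hε.2
    exact integral_pvDomain_inv_cos_sub_cos hs hε.1 hεs hεπ
  have hsin : sin s ≠ 0 := (sin_pos_of_mem_Ioo hs).ne'
  have hcont : ContinuousAt
      (fun ε : ℝ => 2 * (log (sin (s + ε / 2)) - log (sin (s - ε / 2))) / sin s) 0 :=
    (((ContinuousAt.log (by fun_prop) (by simpa using hsin)).sub
      (ContinuousAt.log (by fun_prop) (by simpa using hsin))).const_mul 2).div_const _
  have hlim := hcont.tendsto.mono_left (nhdsWithin_le_nhds (s := Ioi 0))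
  simp only [zero_div, add_zero, sub_zero, sub_self, mul_zero] at hlim
  exact ⟨heval.mono fun ε hε => hε.1, hlim.congr' (heval.mono fun ε hε => hε.2.symm)⟩

/-- The transform `F ↦ (sin s / 2π) ⨍ F(σ) / (cos s - cos σ) dσ` through which `η` and `φ` are
defined. -/
noncomputable def cosTransform (F : ℝ → ℝ) (s : ℝ) : ℝ :=
  sin s / (2 * π) * pvIntegral2 (fun σ => F σ / (cos s - cos σ)) s

/-- A sufficient condition for the principal value in `cosTransform F s` to exist: subtracting a
constant (in practice the value at `s`) from `F` makes the integrand Lebesgue integrable. -/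
def PVIntegrable (F : ℝ → ℝ) (s : ℝ) : Prop :=
  ∃ c, IntegrableOn (fun σ => (F σ - c) / (cos s - cos σ)) (Icc 0 (2 * π))

lemma pvIntegral2_congr {u v : ℝ → ℝ} {s : ℝ} (h : EqOn u v (Icc 0 (2 * π))) :
    pvIntegral2 u s = pvIntegral2 v s := by
  simp only [pvIntegral2]
  congr 1 with ε
  exact setIntegral_congr_fun (measurableSet_pvDomain s ε) (h.mono (pvDomain_subset s ε))

lemma cosTransform_congr {F G : ℝ → ℝ} {s : ℝ}
    (h : ∀ σ ∈ Icc 0 (2 * π), cos σ ≠ cos s → F σ = G σ) :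
    cosTransform F s = cosTransform G s := by
  rw [cosTransform, pvIntegral2_congr fun σ hσ => ?_, cosTransform]
  by_cases hcos : cos σ = cos s
  · simp only [hcos, sub_self, div_zero]
  · simp only [h σ hσ hcos]

lemma cosTransform_eq_integral {F : ℝ → ℝ} {s c : ℝ} (hs : s ∈ Ioo 0 π)
    (hF : IntegrableOn (fun σ => (F σ - c) / (cos s - cos σ)) (Icc 0 (2 * π))) :
    cosTransform F s =
      sin s / (2 * π) * ∫ σ in Icc 0 (2 * π), (F σ - c) / (cos s - cos σ) := by
  obtain ⟨hkernel, hlim⟩ := tendsto_integral_pvDomain_inv_cos_sub_cos hs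
  have hsum := (tendsto_setIntegral_pvDomain s hF).add (hlim.const_mul c)
  rw [mul_zero, add_zero] at hsum
  refine congrArg (sin s / (2 * π) * ·) (Tendsto.limUnder_eq (hsum.congr' ?_))
  filter_upwards [hkernel] with ε hε
  rw [← integral_const_mul, ← integral_add (hF.mono_set (pvDomain_subset s ε)) (hε.const_mul c)]
  refine setIntegral_congr_fun (measurableSet_pvDomain s ε) fun σ _ => ?_
  ring

lemma PVIntegrable.add {F G : ℝ → ℝ} {s : ℝ} (hF : PVIntegrable F s) (hG : PVIntegrable G s) :
    PVIntegrable (fun σ => F σ + G σ) s := by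
  obtain ⟨⟨a, ha⟩, ⟨b, hb⟩⟩ := hF, hG
  exact ⟨a + b, (ha.add hb).congr_fun (fun σ _ => by simp only [Pi.add_apply]; ring)
    measurableSet_Icc⟩

lemma PVIntegrable.const_mul {F : ℝ → ℝ} {s : ℝ} (hF : PVIntegrable F s) (k : ℝ) :
    PVIntegrable (fun σ => k * F σ) s := by
  obtain ⟨c, hc⟩ := hF
  exact ⟨k * c, IntegrableOn.congr_fun (hc.const_mul k) (fun σ _ => by ring) measurableSet_Icc⟩

lemma cosTransform_add {F G : ℝ → ℝ} {s : ℝ} (hs : s ∈ Ioo 0 π) (hF : PVIntegrable F s)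
    (hG : PVIntegrable G s) :
    cosTransform (fun σ => F σ + G σ) s = cosTransform F s + cosTransform G s := by
  obtain ⟨⟨a, ha⟩, ⟨b, hb⟩⟩ := hF, hG
  have hsplit : EqOn (fun σ => (F σ - a) / (cos s - cos σ) + (G σ - b) / (cos s - cos σ))
      (fun σ => (F σ + G σ - (a + b)) / (cos s - cos σ)) (Icc 0 (2 * π)) := fun σ _ => by ring
  rw [cosTransform_eq_integral hs ((ha.add hb).congr_fun hsplit measurableSet_Icc),
    cosTransform_eq_integral hs ha, cosTransform_eq_integral hs hb, ← mul_add,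
    ← integral_add ha hb, setIntegral_congr_fun measurableSet_Icc hsplit]

lemma cosTransform_const_mul {F : ℝ → ℝ} {s : ℝ} (hs : s ∈ Ioo 0 π) (hF : PVIntegrable F s)
    (k : ℝ) : cosTransform (fun σ => k * F σ) s = k * cosTransform F s := by
  obtain ⟨c, hc⟩ := hF
  have hscale : EqOn (fun σ => k * ((F σ - c) / (cos s - cos σ)))
      (fun σ => (k * F σ - k * c) / (cos s - cos σ)) (Icc 0 (2 * π)) := fun σ _ => by ring
  have hint := IntegrableOn.congr_fun (hc.const_mul k) hscale measurableSet_Icc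
  rw [cosTransform_eq_integral hs hint, cosTransform_eq_integral hs hc,
    ← setIntegral_congr_fun measurableSet_Icc hscale,
    integral_const_mul]
  ring

/-! ### The transform of a mean value -/

lemma integrableOn_Ioo_iff_integrable_gd (u : ℝ → ℝ) :
    IntegrableOn u (Ioo 0 π) ↔ Integrable fun y => sin (gd y) * u (gd y) := by
  rw [← range_gd, ← image_univ, integrableOn_image_iff_integrableOn_abs_deriv_smul .univ
    (fun y _ => (hasDerivAt_gd y).hasDerivWithinAt) strictMono_gd.injective.injOn,
    integrableOn_univ]
  simp only [abs_of_pos (sin_pos_of_mem_Ioo (gd_mem_Ioo _)), smul_eq_mul]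

lemma integral_Ioo_eq_integral_gd (u : ℝ → ℝ) :
    ∫ x in Ioo 0 π, u x = ∫ y, sin (gd y) * u (gd y) := by
  rw [← range_gd, ← image_univ, integral_image_eq_integral_abs_deriv_smul .univ
    (fun y _ => (hasDerivAt_gd y).hasDerivWithinAt) strictMono_gd.injective.injOn,
    Measure.restrict_univ]
  simp only [abs_of_pos (sin_pos_of_mem_Ioo (gd_mem_Ioo _)), smul_eq_mul]

lemma integral_Icc_of_symm {u : ℝ → ℝ} (hsymm : ∀ σ, u (2 * π - σ) = u σ)
    (hu : IntegrableOn u (Ioo 0 π)) :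
    IntegrableOn u (Icc 0 (2 * π)) ∧ ∫ σ in Icc 0 (2 * π), u σ = 2 * ∫ σ in Ioo 0 π, u σ := by
  have hπ := pi_pos
  have hleft : IntervalIntegrable u volume 0 π :=
    (intervalIntegrable_iff_integrableOn_Ioo_of_le hπ.le).2 hu
  have hright : IntervalIntegrable u volume π (2 * π) := by
    have h := (hleft.comp_sub_left (2 * π)).symm
    rw [sub_zero, show 2 * π - π = π by ring] at h
    exact h.congr fun σ _ => hsymm σ
  have hreflect : ∫ σ in π..2 * π, u σ = ∫ σ in 0..π, u σ := by
    have h := intervalIntegral.integral_comp_sub_left u (2 * π) (a := 0) (b := π)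
    rw [sub_zero, show 2 * π - π = π by ring] at h
    simpa only [hsymm] using h.symm
  refine ⟨(intervalIntegrable_iff_integrableOn_Icc_of_le (by linarith)).1 (hleft.trans hright), ?_⟩
  rw [integral_Icc_eq_integral_Ioc, ← intervalIntegral.integral_of_le (by linarith),
    ← intervalIntegral.integral_add_adjacent_intervals hleft hright, hreflect, ← two_mul,
    intervalIntegral.integral_of_le hπ.le, integral_Ioc_eq_integral_Ioo]

lemma IsMeanValue.abs_sub_le {F Φ : ℝ → ℝ} {M t y : ℝ} (hF : IsMeanValue F Φ (gd t))
    (hΦ : IsSinLipschitz M Φ) (hyt : y ≠ t) : |F (gd y) - Φ (gd t)| ≤ M * |y - t| := by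
  obtain ⟨ξ, hξ, hFξ⟩ :=
    hF.mem_image (gd y) (Ioo_subset_Icc_self (gd_mem_Ioo y)) (strictMono_gd.injective.ne hyt)
  obtain ⟨z, rfl⟩ : ξ ∈ range gd :=
    range_gd ▸ uIoo_subset_Ioo_zero_pi (gd_mem_Ioo t) (Ioo_subset_Icc_self (gd_mem_Ioo y)) hξ
  have hz : |z - t| ≤ |y - t| := by
    refine abs_sub_left_of_mem_uIcc ?_
    rcases hyt.lt_or_gt with hlt | hlt
    · rw [uIoo_of_gt (strictMono_gd hlt)] at hξ
      exact mem_uIcc_of_ge (strictMono_gd.lt_iff_lt.1 hξ.1).le (strictMono_gd.lt_iff_lt.1 hξ.2).le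
    · rw [uIoo_of_lt (strictMono_gd hlt)] at hξ
      exact mem_uIcc_of_le (strictMono_gd.lt_iff_lt.1 hξ.1).le (strictMono_gd.lt_iff_lt.1 hξ.2).le
  rw [← hFξ]
  exact (hΦ.abs_sub_le t z).trans (mul_le_mul_of_nonneg_left hz hΦ.nonneg)

lemma IsMeanValue.abs_kernel_le {F Φ : ℝ → ℝ} {M t : ℝ} (hF : IsMeanValue F Φ (gd t))
    (hΦ : IsSinLipschitz M Φ) (y : ℝ) :
    sin (gd y) * |(F (gd y) - Φ (gd t)) / (cos (gd t) - cos (gd y))| ≤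
      M / sin (gd t) * |(y - t) / sinh (y - t)| := by
  rcases eq_or_ne y t with rfl | hyt
  · simp
  have hsiny := sin_pos_of_mem_Ioo (gd_mem_Ioo y)
  have hsint := sin_pos_of_mem_Ioo (gd_mem_Ioo t)
  rw [cos_gd_sub_cos_gd, abs_div, abs_mul, abs_of_pos (mul_pos hsint hsiny), abs_div]
  calc sin (gd y) * (|F (gd y) - Φ (gd t)| / (|sinh (y - t)| * (sin (gd t) * sin (gd y))))
      = |F (gd y) - Φ (gd t)| / (|sinh (y - t)| * sin (gd t)) := by field_simp
    _ ≤ M * |y - t| / (|sinh (y - t)| * sin (gd t)) := by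
        gcongr
        exact hF.abs_sub_le hΦ hyt
    _ = M / sin (gd t) * (|y - t| / |sinh (y - t)|) := by field_simp

lemma IsMeanValue.integrableOn_Ioo {F Φ : ℝ → ℝ} {M s : ℝ} (hF : IsMeanValue F Φ s)
    (hΦ : IsSinLipschitz M Φ) (hs : s ∈ Ioo 0 π) :
    IntegrableOn (fun σ => (F σ - Φ s) / (cos s - cos σ)) (Ioo 0 π) ∧
      ∫ σ in Ioo 0 π, |(F σ - Φ s) / (cos s - cos σ)| ≤
        M / sin s * ∫ v, |v / sinh v| := by
  obtain ⟨t, rfl⟩ : s ∈ range gd := range_gd ▸ hs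
  have hdom : Integrable fun y => M / sin (gd t) * |(y - t) / sinh (y - t)| :=
    (integrable_div_sinh.abs.comp_sub_right t).const_mul _
  have hmeas : Measurable fun σ => (F σ - Φ (gd t)) / (cos (gd t) - cos σ) :=
    (hF.measurable.sub_const _).div (measurable_const.sub measurable_cos)
  have hgd : Continuous gd := continuous_iff_continuousAt.2 fun y => (hasDerivAt_gd y).continuousAt
  have hint : IntegrableOn (fun σ => (F σ - Φ (gd t)) / (cos (gd t) - cos σ)) (Ioo 0 π) := by
    refine (integrableOn_Ioo_iff_integrable_gd _).2 (hdom.mono' ?_ (.of_forall fun y => ?_))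
    · exact ((continuous_sin.comp hgd).measurable.mul
        (hmeas.comp hgd.measurable)).aestronglyMeasurable
    · rw [norm_mul, norm_of_nonneg (sin_pos_of_mem_Ioo (gd_mem_Ioo y)).le]
      exact hF.abs_kernel_le hΦ y
  refine ⟨hint, ?_⟩
  rw [integral_Ioo_eq_integral_gd]
  calc ∫ y, sin (gd y) * |(F (gd y) - Φ (gd t)) / (cos (gd t) - cos (gd y))|
      ≤ ∫ y, M / sin (gd t) * |(y - t) / sinh (y - t)| :=
        integral_mono ((integrableOn_Ioo_iff_integrable_gd _).1 hint.abs) hdom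
          (hF.abs_kernel_le hΦ)
    _ = M / sin (gd t) * ∫ v, |v / sinh v| := by
        rw [integral_const_mul, integral_sub_right_eq_self fun v => |v / sinh v|]

lemma IsMeanValue.integrableOn_Icc {F Φ : ℝ → ℝ} {M s : ℝ} (hF : IsMeanValue F Φ s)
    (hΦ : IsSinLipschitz M Φ) (hs : s ∈ Ioo 0 π) :
    IntegrableOn (fun σ => (F σ - Φ s) / (cos s - cos σ)) (Icc 0 (2 * π)) :=
  (integral_Icc_of_symm (fun σ => by rw [hF.symm, cos_two_pi_sub])
    (hF.integrableOn_Ioo hΦ hs).1).1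

lemma IsMeanValue.pvIntegrable {F Φ : ℝ → ℝ} {M s : ℝ} (hF : IsMeanValue F Φ s)
    (hΦ : IsSinLipschitz M Φ) (hs : s ∈ Ioo 0 π) : PVIntegrable F s :=
  ⟨Φ s, hF.integrableOn_Icc hΦ hs⟩

lemma IsMeanValue.abs_cosTransform_le {F Φ : ℝ → ℝ} {M s : ℝ} (hF : IsMeanValue F Φ s)
    (hΦ : IsSinLipschitz M Φ) (hs : s ∈ Ioo 0 π) :
    |cosTransform F s| ≤ (∫ v, |v / sinh v|) / π * M := by
  have hsin := sin_pos_of_mem_Ioo hs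
  obtain ⟨hint, hbound⟩ := hF.integrableOn_Ioo hΦ hs
  rw [cosTransform_eq_integral hs (hF.integrableOn_Icc hΦ hs), abs_mul,
    abs_of_pos (div_pos hsin two_pi_pos)]
  calc sin s / (2 * π) * |∫ σ in Icc 0 (2 * π), (F σ - Φ s) / (cos s - cos σ)|
      ≤ sin s / (2 * π) * ∫ σ in Icc 0 (2 * π), |(F σ - Φ s) / (cos s - cos σ)| := by
        gcongr
        exact abs_integral_le_integral_abs
    _ = sin s / (2 * π) * (2 * ∫ σ in Ioo 0 π, |(F σ - Φ s) / (cos s - cos σ)|) := by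
        rw [(integral_Icc_of_symm (fun σ => by rw [hF.symm, cos_two_pi_sub]) hint.abs).2]
    _ ≤ sin s / (2 * π) * (2 * (M / sin s * ∫ v, |v / sinh v|)) := by gcongr
    _ = (∫ v, |v / sinh v|) / π * M := by field_simp

/-! ### Monotone symbols -/

/-- The properties of a simple-loop symbol on which the expansion of `η` rests: a `C²` function
symmetric about `π` and nondecreasing on `[0, π]`. -/
structure IsMonotoneSymbol (w : ℝ → ℝ) : Prop where
  contDiff : ContDiff ℝ 2 w
  symm : ∀ x, w (2 * π - x) = w x
  deriv_nonneg : ∀ x ∈ Ioo 0 π, 0 ≤ deriv w x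

lemma IsSimpleLoop.isMonotoneSymbol {α : ℝ} {w : ℝ → ℝ} (hw : IsSimpleLoop α w) :
    IsMonotoneSymbol w :=
  ⟨hw.smooth, hw.symm, fun x hx => (hw.deriv_pos x hx).le⟩

namespace IsMonotoneSymbol

variable {f g w : ℝ → ℝ}

lemma differentiable (hw : IsMonotoneSymbol w) : Differentiable ℝ w :=
  hw.contDiff.differentiable two_ne_zero

lemma contDiff_deriv (hw : IsMonotoneSymbol w) : ContDiff ℝ 1 (deriv w) :=
  ContDiff.deriv' (n := 1) (one_add_one_eq_two (R := WithTop ℕ∞) ▸ hw.contDiff)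

lemma deriv_add (hf : IsMonotoneSymbol f) (hg : IsMonotoneSymbol g) (x : ℝ) :
    deriv (fun y => f y + g y) x = deriv f x + deriv g x :=
  deriv_fun_add (hf.differentiable x) (hg.differentiable x)

lemma add (hf : IsMonotoneSymbol f) (hg : IsMonotoneSymbol g) :
    IsMonotoneSymbol fun x => f x + g x where
  contDiff := hf.contDiff.add hg.contDiff
  symm x := by rw [hf.symm, hg.symm]
  deriv_nonneg x hx := by
    rw [hf.deriv_add hg]
    exact add_nonneg (hf.deriv_nonneg x hx) (hg.deriv_nonneg x hx)

end IsMonotoneSymbol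

lemma eventually_mul_sin_le_nhdsGT_zero {φ : ℝ → ℝ} {a : ℝ} (h0 : φ 0 = 0) (hφ : HasDerivAt φ a 0)
    (ha : 0 < a) : ∀ᶠ x in 𝓝[>] 0, a / 2 * sin x ≤ φ x := by
  have hslope := (hasDerivAt_iff_tendsto_slope.1 hφ).mono_left (nhdsGT_le_nhdsNE 0)
  filter_upwards [hslope.eventually_const_lt (half_lt_self ha), self_mem_nhdsWithin] with x hx hx0
  rw [slope_def_field, h0, sub_zero, sub_zero, lt_div_iff₀ hx0] at hx
  exact (mul_le_mul_of_nonneg_left (sin_le hx0.le) (half_pos ha).le).trans hx.le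

lemma eventually_mul_sin_le_nhdsLT_pi {φ : ℝ → ℝ} {b : ℝ} (hπ : φ π = 0)
    (hφ : HasDerivAt φ b π) (hb : b < 0) : ∀ᶠ x in 𝓝[<] π, -b / 2 * sin x ≤ φ x := by
  have hreflect : HasDerivAt (fun x => φ (π - x)) (-b) 0 :=
    HasDerivAt.comp_const_sub π 0 (by simpa using hφ)
  have htendsto : Tendsto (fun x => π - x) (𝓝[<] π) (𝓝[>] 0) :=
    tendsto_nhdsWithin_iff.2 ⟨(Continuous.tendsto' (by fun_prop) π 0 (sub_self π)).mono_left
      nhdsWithin_le_nhds, eventually_mem_nhdsWithin.mono fun x (hx : x < π) => sub_pos.2 hx⟩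
  have h := htendsto.eventually
    (eventually_mul_sin_le_nhdsGT_zero (by simpa using hπ) hreflect (neg_pos.2 hb))
  simpa only [sin_pi_sub, sub_sub_cancel] using h

lemma exists_mul_sin_le {φ : ℝ → ℝ} {a b : ℝ} (hcont : Continuous φ)
    (hpos : ∀ x ∈ Ioo 0 π, 0 < φ x) (h0 : φ 0 = 0) (hφ0 : HasDerivAt φ a 0) (ha : 0 < a)
    (hπ : φ π = 0) (hφπ : HasDerivAt φ b π) (hb : b < 0) :
    ∃ m > 0, ∀ x ∈ Ioo 0 π, m * sin x ≤ φ x := by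
  obtain ⟨δ, hδ, hleft⟩ :=
    mem_nhdsGT_iff_exists_Ioo_subset.1 (eventually_mul_sin_le_nhdsGT_zero h0 hφ0 ha)
  obtain ⟨ρ, hρ, hright⟩ :=
    mem_nhdsLT_iff_exists_Ioo_subset.1 (eventually_mul_sin_le_nhdsLT_pi hπ hφπ hb)
  obtain ⟨m, hm, hmid⟩ := isCompact_Icc.exists_forall_le' hcont.continuousOn
    fun x (hx : x ∈ Icc δ ρ) => hpos x ⟨hδ.trans_le hx.1, hx.2.trans_lt hρ⟩
  refine ⟨min m (min (a / 2) (-b / 2)), lt_min hm (lt_min (by linarith) (by linarith)),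
    fun x hx => ?_⟩
  have hsin := (sin_pos_of_mem_Ioo hx).le
  rcases lt_or_ge x δ with hxδ | hxδ
  · exact (mul_le_mul_of_nonneg_right ((min_le_right _ _).trans (min_le_left _ _)) hsin).trans
      (hleft ⟨hx.1, hxδ⟩)
  rcases lt_or_ge ρ x with hxρ | hxρ
  · exact (mul_le_mul_of_nonneg_right ((min_le_right _ _).trans (min_le_right _ _)) hsin).trans
      (hright ⟨hxρ, hx.2⟩)
  · calc min m (min (a / 2) (-b / 2)) * sin x ≤ m * 1 := by
          gcongr
          exacts [min_le_left _ _, sin_le_one x]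
      _ ≤ φ x := by simpa using hmid x ⟨hxδ, hxρ⟩

lemma IsSimpleLoop.exists_mul_sin_le_deriv {α : ℝ} {w : ℝ → ℝ} (hw : IsSimpleLoop α w) :
    ∃ m > 0, ∀ x ∈ Ioo 0 π, m * sin x ≤ deriv w x := by
  have hC1 := hw.isMonotoneSymbol.contDiff_deriv
  have hderiv : ∀ x, HasDerivAt (deriv w) (deriv (deriv w) x) x := fun x =>
    (hC1.differentiable one_ne_zero x).hasDerivAt
  exact exists_mul_sin_le hC1.continuous hw.deriv_pos hw.deriv_zero (hderiv 0) hw.deriv2_zero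
    hw.deriv_pi (hderiv π) hw.deriv2_pi

lemma exists_abs_deriv_le {p : ℝ → ℝ} (hp : ContDiff ℝ 1 p) :
    ∃ D, ∀ x ∈ Icc 0 π, |deriv p x| ≤ D :=
  isCompact_Icc.exists_bound_of_continuousOn (hp.continuous_deriv le_rfl).continuousOn

lemma exists_isSinLipschitz_log_div {p q : ℝ → ℝ} {m : ℝ} (hp : ContDiff ℝ 1 p)
    (hq : ContDiff ℝ 1 q) (hm : 0 < m) (hmp : ∀ x ∈ Ioo 0 π, m * sin x ≤ p x)
    (hmq : ∀ x ∈ Ioo 0 π, m * sin x ≤ q x) :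
    ∃ M, IsSinLipschitz M fun x => log (p x / q x) := by
  obtain ⟨D, hD⟩ := exists_abs_deriv_le hp
  obtain ⟨E, hE⟩ := exists_abs_deriv_le hq
  refine ⟨D / m + E / m, fun x hx => ?_⟩
  have hsin : 0 < m * sin x := mul_pos hm (sin_pos_of_mem_Ioo hx)
  have hpx : 0 < p x := hsin.trans_le (hmp x hx)
  have hqx : 0 < q x := hsin.trans_le (hmq x hx)
  have hDx := hD x (Ioo_subset_Icc_self hx)
  have hEx := hE x (Ioo_subset_Icc_self hx)
  have hlog := ((hp.differentiable one_ne_zero x).hasDerivAt.fun_div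
    (hq.differentiable one_ne_zero x).hasDerivAt hqx.ne').log (div_pos hpx hqx).ne'
  refine ⟨deriv p x / p x - deriv q x / q x, hlog.congr_deriv (by field_simp), ?_⟩
  have hquot : ∀ {d r B : ℝ}, |d| ≤ B → m * sin x ≤ r → |d / r| * sin x ≤ B / m := by
    intro d r B hd hr
    rw [abs_div, abs_of_pos (hsin.trans_le hr), div_mul_eq_mul_div,
      div_le_div_iff₀ (hsin.trans_le hr) hm, mul_assoc, mul_comm (sin x)]
    exact mul_le_mul hd hr hsin.le ((abs_nonneg d).trans hd)
  calc |deriv p x / p x - deriv q x / q x| * sin x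
      ≤ (|deriv p x / p x| + |deriv q x / q x|) * sin x :=
        mul_le_mul_of_nonneg_right (abs_sub _ _) (sin_pos_of_mem_Ioo hx).le
    _ ≤ D / m + E / m := by
        rw [add_mul]
        exact add_le_add (hquot hDx (hmp x hx)) (hquot hEx (hmq x hx))

lemma exists_isSinLipschitz_div {p q : ℝ → ℝ} {m B : ℝ} (hp : ContDiff ℝ 1 p)
    (hq : ContDiff ℝ 1 q) (hm : 0 < m) (hmq : ∀ x ∈ Ioo 0 π, m * sin x ≤ q x)
    (hpq : ∀ x ∈ Ioo 0 π, |p x| ≤ B * q x) :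
    ∃ M, IsSinLipschitz M fun x => p x / q x := by
  obtain ⟨D, hD⟩ := exists_abs_deriv_le hp
  obtain ⟨E, hE⟩ := exists_abs_deriv_le hq
  refine ⟨(D + B * E) / m, fun x hx => ?_⟩
  have hsin := sin_pos_of_mem_Ioo hx
  have hqx : 0 < q x := (mul_pos hm hsin).trans_le (hmq x hx)
  have hDx := hD x (Ioo_subset_Icc_self hx)
  have hEx := hE x (Ioo_subset_Icc_self hx)
  have hnum : |deriv p x * q x - p x * deriv q x| ≤ (D + B * E) * q x := by
    calc |deriv p x * q x - p x * deriv q x| ≤ |deriv p x| * q x + |p x| * |deriv q x| := by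
          simpa only [abs_mul, abs_of_pos hqx] using
            abs_sub (deriv p x * q x) (p x * deriv q x)
      _ ≤ D * q x + B * q x * E :=
          add_le_add (mul_le_mul_of_nonneg_right hDx hqx.le)
            (mul_le_mul (hpq x hx) hEx (abs_nonneg _) ((abs_nonneg _).trans (hpq x hx)))
      _ = (D + B * E) * q x := by ring
  have hnonneg : 0 ≤ D + B * E := nonneg_of_mul_nonneg_left ((abs_nonneg _).trans hnum) hqx
  refine ⟨_, (hp.differentiable one_ne_zero x).hasDerivAt.fun_div
    (hq.differentiable one_ne_zero x).hasDerivAt hqx.ne', ?_⟩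
  rw [abs_div, abs_of_pos (pow_pos hqx 2)]
  calc |deriv p x * q x - p x * deriv q x| / q x ^ 2 * sin x
      ≤ (D + B * E) * q x / q x ^ 2 * sin x := by gcongr
    _ = (D + B * E) * (m * sin x) / (m * q x) := by field_simp
    _ ≤ (D + B * E) * q x / (m * q x) := by
        gcongr
        exact hmq x hx
    _ = (D + B * E) / m := by field_simp

/-! ### Expansion of `η` -/

/-- The second-order remainder of `L ↦ log (1 + (exp L - 1) * r)`, the logarithm of the factor by
which `b_{f+g}` changes when `g` is scaled by `exp L` and `r = b_g / b_{f+g}`. -/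
noncomputable def logRemainder (L r : ℝ) : ℝ :=
  log (1 + (exp L - 1) * r) - L * r

lemma measurable_logRemainder (L : ℝ) : Measurable (logRemainder L) := by
  unfold logRemainder
  fun_prop

lemma third_le_one_add_exp_sub_one_mul {L r : ℝ} (hL : |L| ≤ 1) (hr : r ∈ Icc 0 1) :
    1 / 3 ≤ 1 + (exp L - 1) * r := by
  have hexp : 1 / 3 ≤ exp L := by
    have h1 : 1 / 3 ≤ exp (-1) := by
      rw [exp_neg, one_div]
      exact inv_anti₀ (exp_pos 1) (by linarith [exp_one_lt_d9])
    exact h1.trans (exp_le_exp.2 (abs_le.1 hL).1)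
  nlinarith [hr.1, hr.2]

lemma exists_hasDerivAt_logRemainder {L r : ℝ} (hL : |L| ≤ 1) (hr : r ∈ Icc 0 1) :
    ∃ d, HasDerivAt (logRemainder L) d r ∧ |d| ≤ 9 * L ^ 2 := by
  have hge := third_le_one_add_exp_sub_one_mul hL hr
  have hlin : HasDerivAt (fun x => 1 + (exp L - 1) * x) (exp L - 1) r := by
    simpa using ((hasDerivAt_id r).const_mul (exp L - 1)).const_add 1
  have hmul : HasDerivAt (fun x => L * x) L r := by
    simpa using (hasDerivAt_id r).const_mul L
  refine ⟨_, (hlin.log (by linarith)).sub hmul, ?_⟩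
  have hcross : |L * (exp L - 1) * r| ≤ 2 * L ^ 2 := by
    calc |L * (exp L - 1) * r| = |L| * |exp L - 1| * r := by
          rw [abs_mul, abs_mul, abs_of_nonneg hr.1]
      _ ≤ |L| * (2 * |L|) * 1 :=
          mul_le_mul (mul_le_mul_of_nonneg_left (abs_exp_sub_one_le hL) (abs_nonneg L)) hr.2 hr.1
            (by positivity)
      _ = 2 * L ^ 2 := by rw [← sq_abs L]; ring
  have hnum : |exp L - 1 - L - L * (exp L - 1) * r| ≤ 3 * L ^ 2 :=
    (abs_sub _ _).trans (by linarith [abs_exp_sub_one_sub_id_le hL])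
  have hsplit : (exp L - 1) / (1 + (exp L - 1) * r) - L =
      (exp L - 1 - L - L * (exp L - 1) * r) / (1 + (exp L - 1) * r) := by
    rw [eq_div_iff (by linarith), sub_mul, div_mul_cancel₀ _ (by linarith)]
    ring
  rw [hsplit, abs_div, abs_of_pos (by linarith : 0 < 1 + (exp L - 1) * r)]
  exact div_le_of_le_mul₀ (by linarith) (by positivity) (by nlinarith [sq_nonneg L])

namespace IsMonotoneSymbol

variable {f g w : ℝ → ℝ} {s : ℝ}

lemma isMeanValue_slopeRatio_cos (hw : IsMonotoneSymbol w) (hs : s ∈ Ioo 0 π) :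
    IsMeanValue (slopeRatio w (fun x => -2 * cos x) s) (fun ξ => deriv w ξ / (2 * sin ξ)) s := by
  have hderiv : ∀ x, HasDerivAt (fun x => -2 * cos x) (2 * sin x) x := fun x =>
    ((hasDerivAt_cos x).const_mul (-2)).congr_deriv (by ring)
  have h := isMeanValue_slopeRatio hw.differentiable (fun x => (hderiv x).differentiableAt) hw.symm
    (fun x => by rw [cos_two_pi_sub])
    (fun ξ hξ => by
      rw [(hderiv ξ).deriv]
      exact (mul_pos two_pos (sin_pos_of_mem_Ioo hξ)).ne') hs
  simpa only [(hderiv _).deriv] using h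

lemma isMeanValue_slopeRatio_add (hf : IsMonotoneSymbol f) (hg : IsMonotoneSymbol g)
    (hpos : ∀ x ∈ Ioo 0 π, 0 < deriv (fun y => f y + g y) x) (hs : s ∈ Ioo 0 π) :
    IsMeanValue (slopeRatio g (fun x => f x + g x) s)
      (fun ξ => deriv g ξ / deriv (fun y => f y + g y) ξ) s :=
  isMeanValue_slopeRatio hg.differentiable (hf.add hg).differentiable hg.symm (hf.add hg).symm
    (fun ξ hξ => (hpos ξ hξ).ne') hs

lemma deriv_le_deriv_add (hf : IsMonotoneSymbol f) (hg : IsMonotoneSymbol g) {x : ℝ}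
    (hx : x ∈ Ioo 0 π) : deriv g x ≤ deriv (fun y => f y + g y) x := by
  rw [hf.deriv_add hg]
  exact le_add_of_nonneg_left (hf.deriv_nonneg x hx)

lemma mapsTo_deriv_div (hf : IsMonotoneSymbol f) (hg : IsMonotoneSymbol g) :
    MapsTo (fun ξ => deriv g ξ / deriv (fun y => f y + g y) ξ) (Ioo 0 π) (Icc 0 1) := fun ξ hξ =>
  ⟨div_nonneg (hg.deriv_nonneg ξ hξ) ((hf.add hg).deriv_nonneg ξ hξ),
    div_le_one_of_le₀ (hf.deriv_le_deriv_add hg hξ) ((hf.add hg).deriv_nonneg ξ hξ)⟩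

lemma exists_isSinLipschitz_log {m : ℝ} (hw : IsMonotoneSymbol w) (hm : 0 < m)
    (hmw : ∀ x ∈ Ioo 0 π, m * sin x ≤ deriv w x) :
    ∃ M, IsSinLipschitz M (log ∘ fun ξ => deriv w ξ / (2 * sin ξ)) := by
  refine exists_isSinLipschitz_log_div (m := min m 2) hw.contDiff_deriv
    (contDiff_const.mul contDiff_sin) (lt_min hm two_pos) (fun x hx => ?_) fun x hx => ?_
  · exact (mul_le_mul_of_nonneg_right (min_le_left m 2) (sin_pos_of_mem_Ioo hx).le).trans
      (hmw x hx)
  · exact mul_le_mul_of_nonneg_right (min_le_right m 2) (sin_pos_of_mem_Ioo hx).le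

lemma exists_isSinLipschitz_deriv_div {m : ℝ} (hf : IsMonotoneSymbol f) (hg : IsMonotoneSymbol g)
    (hm : 0 < m) (hmw : ∀ x ∈ Ioo 0 π, m * sin x ≤ deriv (fun y => f y + g y) x) :
    ∃ M, IsSinLipschitz M fun ξ => deriv g ξ / deriv (fun y => f y + g y) ξ := by
  refine exists_isSinLipschitz_div (B := 1) hg.contDiff_deriv (hf.add hg).contDiff_deriv hm hmw
    fun x hx => ?_
  rw [abs_of_nonneg (hg.deriv_nonneg x hx), one_mul]
  exact hf.deriv_le_deriv_add hg hx

end IsMonotoneSymbol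

lemma etaF_eq_cosTransform (w : ℝ → ℝ) (s : ℝ) :
    etaF w s = cosTransform (log ∘ slopeRatio w (fun x => -2 * cos x) s) s :=
  cosTransform_congr (F := fun σ => log (bSymb w σ s)) fun σ _ hcos => by
    rw [bSymb_eq_slopeRatio w hcos, Function.comp]

lemma phiF_eq_cosTransform (f g : ℝ → ℝ) (s : ℝ) :
    phiF f g s = cosTransform (slopeRatio g (fun x => f x + g x) s) s := by
  have hphi : phiF f g s =
      cosTransform (fun σ => bSymb g σ s / (bSymb f σ s + bSymb g σ s)) s := by
    simp only [phiF, cosTransform, div_div]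
  rw [hphi]
  refine cosTransform_congr fun σ _ hcos => ?_
  have hden : 2 * (cos s - cos σ) ≠ 0 := mul_ne_zero two_ne_zero (sub_ne_zero.2 hcos.symm)
  rw [bSymb, if_neg hcos, bSymb, if_neg hcos, ← add_div, div_div_div_cancel_right₀ hden,
    slopeRatio, add_sub_add_comm]

lemma log_slopeRatio_add_exp_mul {f g : ℝ → ℝ} {L s σ : ℝ} (hf : IsMonotoneSymbol f)
    (hg : IsMonotoneSymbol g) (hpos : ∀ x ∈ Ioo 0 π, 0 < deriv (fun y => f y + g y) x)
    (hL : |L| ≤ 1) (hs : s ∈ Ioo 0 π) (hσ : σ ∈ Icc 0 (2 * π)) (hcos : cos σ ≠ cos s) :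
    log (slopeRatio (fun x => f x + exp L * g x) (fun x => -2 * cos x) s σ) =
      log (slopeRatio (fun x => f x + g x) (fun x => -2 * cos x) s σ) +
        (L * slopeRatio g (fun x => f x + g x) s σ +
          logRemainder L (slopeRatio g (fun x => f x + g x) s σ)) := by
  obtain ⟨ξ, hξ, hb⟩ := ((hf.add hg).isMeanValue_slopeRatio_cos hs).mem_image_Ioo hs hσ hcos
  obtain ⟨ζ, hζ, hr⟩ := (hf.isMeanValue_slopeRatio_add hg hpos hs).mem_image_Ioo hs hσ hcos
  have hb0 : slopeRatio (fun x => f x + g x) (fun x => -2 * cos x) s σ ≠ 0 :=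
    hb ▸ (div_pos (hpos ξ hξ) (mul_pos two_pos (sin_pos_of_mem_Ioo hξ))).ne'
  have hfactor := third_le_one_add_exp_sub_one_mul hL (hr ▸ hf.mapsTo_deriv_div hg hζ)
  rw [slopeRatio_add_const_mul (exp L) hb0, log_mul hb0 (by linarith), logRemainder,
    add_sub_cancel]

lemma etaF_add_exp_mul {f g : ℝ → ℝ} {L m s : ℝ} (hf : IsMonotoneSymbol f)
    (hg : IsMonotoneSymbol g) (hm : 0 < m)
    (hmw : ∀ x ∈ Ioo 0 π, m * sin x ≤ deriv (fun y => f y + g y) x)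
    (hL : |L| ≤ 1) (hs : s ∈ Ioo 0 π) :
    etaF (fun x => f x + exp L * g x) s = etaF (fun x => f x + g x) s +
      (phiF f g s * L +
        cosTransform (logRemainder L ∘ slopeRatio g (fun x => f x + g x) s) s) := by
  have hpos : ∀ x ∈ Ioo 0 π, 0 < deriv (fun y => f y + g y) x := fun x hx =>
    (mul_pos hm (sin_pos_of_mem_Ioo hx)).trans_le (hmw x hx)
  have hr := hf.isMeanValue_slopeRatio_add hg hpos hs
  obtain ⟨M, hM⟩ := (hf.add hg).exists_isSinLipschitz_log hm hmw
  obtain ⟨N, hN⟩ := hf.exists_isSinLipschitz_deriv_div hg hm hmw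
  have hlogInt := (((hf.add hg).isMeanValue_slopeRatio_cos hs).comp measurable_log).pvIntegrable
    hM hs
  have hrInt := hr.pvIntegrable hN hs
  have hremInt := (hr.comp (measurable_logRemainder L)).pvIntegrable
    (hN.comp (hf.mapsTo_deriv_div hg) fun r hr => exists_hasDerivAt_logRemainder hL hr) hs
  rw [etaF_eq_cosTransform]
  refine (cosTransform_congr fun σ hσ hcos =>
    log_slopeRatio_add_exp_mul hf hg hpos hL hs hσ hcos).trans ?_
  rw [etaF_eq_cosTransform, phiF_eq_cosTransform, mul_comm _ L,
    ← cosTransform_const_mul hs hrInt, ← cosTransform_add hs (hrInt.const_mul L) hremInt,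
    ← cosTransform_add hs hlogInt ((hrInt.const_mul L).add hremInt)]
  rfl

lemma exists_abs_etaF_add_exp_mul_sub_le {f g : ℝ → ℝ} {m : ℝ} (hf : IsMonotoneSymbol f)
    (hg : IsMonotoneSymbol g) (hm : 0 < m)
    (hmw : ∀ x ∈ Ioo 0 π, m * sin x ≤ deriv (fun y => f y + g y) x) :
    ∃ C > 0, ∀ L : ℝ, |L| ≤ 1 → ∀ s ∈ Ioo 0 π,
      |etaF (fun x => f x + exp L * g x) s - etaF (fun x => f x + g x) s - phiF f g s * L| ≤
        C * L ^ 2 := by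
  obtain ⟨M, hM⟩ := hf.exists_isSinLipschitz_deriv_div hg hm hmw
  have hpos : ∀ x ∈ Ioo 0 π, 0 < deriv (fun y => f y + g y) x := fun x hx =>
    (mul_pos hm (sin_pos_of_mem_Ioo hx)).trans_le (hmw x hx)
  set K := (∫ v, |v / sinh v|) / π * (9 * M) with hK
  refine ⟨max K 1, lt_max_of_lt_right one_pos, fun L hL s hs => ?_⟩
  have hbound := ((hf.isMeanValue_slopeRatio_add hg hpos hs).comp
    (measurable_logRemainder L)).abs_cosTransform_le
      (hM.comp (hf.mapsTo_deriv_div hg) fun r hr => exists_hasDerivAt_logRemainder hL hr) hs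
  rw [etaF_add_exp_mul hf hg hm hmw hL hs, add_sub_cancel_left, add_sub_cancel_left]
  calc _ ≤ (∫ v, |v / sinh v|) / π * (9 * L ^ 2 * M) := hbound
    _ = K * L ^ 2 := by rw [hK]; ring
    _ ≤ max K 1 * L ^ 2 := mul_le_mul_of_nonneg_right (le_max_left K 1) (sq_nonneg L)

theorem eta_expansion_h_pow_h_general {f g : ℝ → ℝ} {m : ℝ} (hf : IsMonotoneSymbol f)
    (hg : IsMonotoneSymbol g) (hm : 0 < m)
    (hmw : ∀ x ∈ Ioo 0 π, m * sin x ≤ deriv (fun y => f y + g y) x) :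
    ∃ C > 0, ∀ h ∈ Ioc (0 : ℝ) 1, ∀ s ∈ Ioo 0 π,
      |etaF (fun x => f x + h ^ h * g x) s - etaF (fun x => f x + g x) s -
        phiF f g s * h * log h| ≤ C * h ^ 2 * log h ^ 2 := by
  obtain ⟨C, hC, hbound⟩ := exists_abs_etaF_add_exp_mul_sub_le hf hg hm hmw
  refine ⟨C, hC, fun h hh s hs => ?_⟩
  have hL : |h * log h| ≤ 1 := mul_comm (log h) h ▸ (abs_log_mul_self_lt h hh.1 hh.2).le
  rw [rpow_def_of_pos hh.1, mul_comm (log h) h, mul_assoc (phiF f g s), mul_assoc C, ← mul_pow]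
  exact hbound _ hL s hs

open Real in
/-- Lemma 3.1(ii) (Lemma `lm:eta`(ii)):
`η_{f+gh^h}(s) = η_{f+g}(s) + φ(s)·h·log h + O(h² log² h)`. -/
theorem eta_expansion_h_pow_h (α : ℝ) (hα : 2 ≤ α) (f g : ℝ → ℝ)
    (hf : IsSimpleLoop α f) (hg : IsSimpleLoop α g)
    (hSL : ∀ n : ℕ, IsSimpleLoop α
      (fun θ => f θ + ((1/(n+1:ℝ)) ^ (1/(n+1:ℝ))) * g θ))
    (hSL' : IsSimpleLoop α (fun θ => f θ + g θ)) :
    ∃ C > (0:ℝ), ∃ N : ℕ, ∀ n ≥ N, ∀ s ∈ Set.Ioo (0:ℝ) π,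
      |etaF (fun θ => f θ + ((1/(n+1:ℝ)) ^ (1/(n+1:ℝ))) * g θ) s
          - etaF (fun θ => f θ + g θ) s
          - phiF f g s * (1/(n+1:ℝ)) * Real.log (1/(n+1:ℝ))|
        ≤ C * (1/(n+1:ℝ))^2 * (Real.log (1/(n+1:ℝ)))^2 := by
  obtain ⟨m, hm, hmw⟩ := hSL'.exists_mul_sin_le_deriv
  obtain ⟨C, hC, hbound⟩ :=
    eta_expansion_h_pow_h_general hf.isMonotoneSymbol hg.isMonotoneSymbol hm hmw
  exact ⟨C, hC, 0, fun n _ s hs => hbound _ ⟨n.one_div_pos_of_nat, div_le_one_of_le₀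
    (by linarith [n.cast_nonneg (α := ℝ)]) (by positivity)⟩ s hs⟩
end

section
/- For every constant 0 < ρ < 1, the Fourier coefficients of the function f_ρ(σ) = ((1+ρ)²/2) · (1 − cos σ)/(1 − 2ρ cos σ + ρ²) are given by: (f_ρ)̂_0 = (1+ρ)/2, and (f_ρ)̂_k = (ρ² − 1)·ρ^{|k|−1}/4 for every integer k ≠ 0. -/
open MeasureTheory Filter Real Topology

/-- The Kac–Murdock–Szegő symbol. -/
noncomputable def kms (ρ : ℝ) : ℝ → ℝ :=
  fun σ => ((1+ρ)^2/2) * ((1 - Real.cos σ)/(1 - 2*ρ*Real.cos σ + ρ^2))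

/-! On the unit circle `1 - 2ρ cos θ + ρ² = |e^{iθ} - ρ|²`, so up to a constant the symbol is
`(1 - cos θ) P(θ)` with `P` the Poisson kernel at `ρ`. The Poisson integral formula applied to
`z ↦ zⁿ` shows that the `k`-th Fourier coefficient of `P` is `ρ^|k|`, and multiplication by `cos`
averages the two neighbouring coefficients. -/

lemma natAbs_sub_one_add_natAbs_add_one {M : Type*} [AddCommMagma M] (g : ℕ → M) {k : ℤ}
    (hk : k ≠ 0) :
    g (k - 1).natAbs + g (k + 1).natAbs = g (k.natAbs - 1) + g (k.natAbs + 1) := by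
  obtain hneg | hpos := hk.lt_or_gt
  · rw [show (k - 1).natAbs = k.natAbs + 1 by omega,
      show (k + 1).natAbs = k.natAbs - 1 by omega, add_comm]
  · rw [show (k - 1).natAbs = k.natAbs - 1 by omega,
      show (k + 1).natAbs = k.natAbs + 1 by omega]

open Complex (I)

lemma fCoeff_const_mul (c : ℝ) (u : ℝ → ℝ) (k : ℤ) :
    fCoeff (fun θ => c * u θ) k = c * fCoeff u k := by
  simp only [fCoeff, Complex.ofReal_mul, mul_assoc, intervalIntegral.integral_const_mul]
  ring

lemma intervalIntegrable_mul_cexp {u : ℝ → ℝ} {a b : ℝ} (hu : IntervalIntegrable u volume a b)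
    (z : ℂ) :
    IntervalIntegrable (fun θ : ℝ => (u θ : ℂ) * Complex.exp (z * θ)) volume a b :=
  IntervalIntegrable.mul_continuousOn ⟨hu.1.ofReal, hu.2.ofReal⟩ (by fun_prop)

lemma fCoeff_sub {u v : ℝ → ℝ} (hu : IntervalIntegrable u volume 0 (2 * π))
    (hv : IntervalIntegrable v volume 0 (2 * π)) (k : ℤ) :
    fCoeff (fun θ => u θ - v θ) k = fCoeff u k - fCoeff v k := by
  simp only [fCoeff, Complex.ofReal_sub, sub_mul]
  rw [intervalIntegral.integral_sub (intervalIntegrable_mul_cexp hu _)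
    (intervalIntegrable_mul_cexp hv _), mul_sub]

lemma ccos_mul_cexp (a z : ℂ) :
    Complex.cos z * Complex.exp (-I * a * z) =
      (Complex.exp (-I * (a - 1) * z) + Complex.exp (-I * (a + 1) * z)) / 2 := by
  rw [Complex.cos, div_mul_eq_mul_div, add_mul, ← Complex.exp_add, ← Complex.exp_add]
  ring_nf

lemma fCoeff_cos_mul {u : ℝ → ℝ} (hu : IntervalIntegrable u volume 0 (2 * π)) (k : ℤ) :
    fCoeff (fun θ => Real.cos θ * u θ) k = (fCoeff u (k - 1) + fCoeff u (k + 1)) / 2 := by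
  have integrand_eq (θ : ℝ) :
      ((Real.cos θ * u θ : ℝ) : ℂ) * Complex.exp (-I * k * θ) =
        ((u θ : ℂ) * Complex.exp (-I * (k - 1 : ℤ) * θ) +
          (u θ : ℂ) * Complex.exp (-I * (k + 1 : ℤ) * θ)) / 2 := by
    push_cast
    rw [mul_right_comm, ccos_mul_cexp]
    ring
  simp only [fCoeff, integrand_eq]
  rw [intervalIntegral.integral_div, intervalIntegral.integral_add
    (intervalIntegrable_mul_cexp hu _) (intervalIntegrable_mul_cexp hu _)]
  ring

lemma fCoeff_neg (u : ℝ → ℝ) (k : ℤ) : fCoeff u (-k) = starRingEnd ℂ (fCoeff u k) := by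
  simp only [fCoeff, map_mul, ← intervalIntegral.intervalIntegral_conj, ← Complex.exp_conj]
  simp [map_ofNat]

lemma fCoeff_comp_circleMap_neg_natCast (P : ℂ → ℝ) (n : ℕ) :
    fCoeff (fun θ => P (circleMap 0 1 θ)) (-n) = circleAverage (P • fun z => z ^ n) 0 1 := by
  have exp_eq_circleMap_pow (θ : ℝ) :
      Complex.exp (-I * ((-n : ℤ) : ℂ) * θ) = circleMap 0 1 θ ^ n := by
    rw [circleMap_zero, Complex.ofReal_one, one_mul, ← Complex.exp_nat_mul]
    push_cast
    ring_nf
  simp only [fCoeff, exp_eq_circleMap_pow]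
  simp [circleAverage_def]

section PoissonKernel

open Metric Complex

lemma continuous_poissonKernel_circleMap {c w : ℂ} {R : ℝ} (hw : w ∈ ball c R) :
    Continuous fun θ => poissonKernel c w (circleMap c R θ) := by
  simp only [poissonKernel_eq_re_herglotzRieszKernel]
  exact continuous_re.comp ((continuousOn_herglotzRieszKernel_sphere hw).comp_continuous
    (continuous_circleMap c R) (circleMap_mem_sphere' c R))

lemma fCoeff_poissonKernel_neg_natCast {w : ℂ} (hw : w ∈ ball 0 1) (n : ℕ) :
    fCoeff (fun θ => poissonKernel 0 w (circleMap 0 1 θ)) (-n) = w ^ n := by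
  rw [fCoeff_comp_circleMap_neg_natCast]
  exact (differentiable_pow n).diffContOnCl.circleAverage_poissonKernel_smul hw

lemma fCoeff_poissonKernel_ofReal {ρ : ℝ} (hρ : (ρ : ℂ) ∈ ball 0 1) (k : ℤ) :
    fCoeff (fun θ => poissonKernel 0 ρ (circleMap 0 1 θ)) k = ρ ^ k.natAbs := by
  obtain ⟨n, rfl | rfl⟩ := k.eq_nat_or_neg
  · rw [← neg_neg (n : ℤ), fCoeff_neg, fCoeff_poissonKernel_neg_natCast hρ]
    simp
  · rw [fCoeff_poissonKernel_neg_natCast hρ]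
    simp

lemma poissonKernel_ofReal_circleMap (ρ θ : ℝ) :
    poissonKernel 0 ρ (circleMap 0 1 θ) =
      (1 - ρ ^ 2) / (1 - 2 * ρ * Real.cos θ + ρ ^ 2) := by
  have norm_sq_sub : ‖circleMap 0 1 θ - ρ‖ ^ 2 = 1 - 2 * ρ * Real.cos θ + ρ ^ 2 := by
    rw [Complex.sq_norm, Complex.normSq_apply]
    simp only [circleMap_zero, ofReal_one, one_mul, sub_re, sub_im, exp_ofReal_mul_I_re,
      exp_ofReal_mul_I_im, ofReal_re, ofReal_im, sub_zero]
    linear_combination Real.sin_sq_add_cos_sq θ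
  simp [poissonKernel_def, norm_sq_sub]

end PoissonKernel

lemma kms_eq_poissonKernel {ρ : ℝ} (hρ : ρ ≠ 1) :
    kms ρ = fun θ => (1 + ρ) / (2 * (1 - ρ)) *
      (poissonKernel 0 ρ (circleMap 0 1 θ) -
        Real.cos θ * poissonKernel 0 ρ (circleMap 0 1 θ)) := by
  have one_sub_ne_zero : 1 - ρ ≠ 0 := sub_ne_zero.2 hρ.symm
  have prefactor_eq : (1 + ρ) ^ 2 / 2 = (1 + ρ) / (2 * (1 - ρ)) * (1 - ρ ^ 2) := by
    field_simp
    ring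
  funext θ
  rw [kms, poissonKernel_ofReal_circleMap, prefactor_eq]
  ring

lemma fCoeff_kms {ρ : ℝ} (hρ : |ρ| < 1) (k : ℤ) :
    fCoeff (kms ρ) k = (1 + ρ) / (2 * (1 - ρ)) *
      (ρ ^ k.natAbs - (ρ ^ (k - 1).natAbs + ρ ^ (k + 1).natAbs) / 2) := by
  have mem_ball : (ρ : ℂ) ∈ Metric.ball 0 1 := by simpa using hρ
  have cont := continuous_poissonKernel_circleMap mem_ball
  rw [kms_eq_poissonKernel (abs_lt.1 hρ).2.ne, fCoeff_const_mul,
    fCoeff_sub (cont.intervalIntegrable _ _)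
      ((Continuous.fun_mul Real.continuous_cos cont).intervalIntegrable _ _),
    fCoeff_cos_mul (cont.intervalIntegrable _ _)]
  simp [fCoeff_poissonKernel_ofReal mem_ball]

theorem kms_fourierCoeff_general {ρ : ℝ} (hρ : |ρ| < 1) :
    fCoeff (kms ρ) 0 = (((1 + ρ) / 2 : ℝ) : ℂ) ∧
    ∀ k : ℤ, k ≠ 0 →
      fCoeff (kms ρ) k = (((ρ ^ 2 - 1) * ρ ^ (k.natAbs - 1) / 4 : ℝ) : ℂ) := by
  have one_sub_ne_zero : 1 - (ρ : ℂ) ≠ 0 :=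
    sub_ne_zero.2 (by exact_mod_cast (abs_lt.1 hρ).2.ne')
  refine ⟨?_, fun k hk => ?_⟩
  · calc fCoeff (kms ρ) 0 = (1 + ρ) / (2 * (1 - ρ)) * (1 - (ρ + ρ) / 2) := by
          simpa using fCoeff_kms hρ 0
      _ = (((1 + ρ) / 2 : ℝ) : ℂ) := by
          push_cast
          field_simp
          ring
  · obtain ⟨n, hn⟩ : ∃ n, k.natAbs = n + 1 :=
      Nat.exists_eq_succ_of_ne_zero (Int.natAbs_ne_zero.2 hk)
    rw [fCoeff_kms hρ, natAbs_sub_one_add_natAbs_add_one (fun m => (ρ : ℂ) ^ m) hk, hn,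
      Nat.add_sub_cancel]
    push_cast
    field_simp
    ring

/-- Fourier coefficients of the Kac–Murdock–Szegő symbol. -/
theorem kms_fourierCoeff (ρ : ℝ) (hρ : ρ ∈ Set.Ioo (0:ℝ) 1) :
    fCoeff (kms ρ) 0 = (((1+ρ)/2 : ℝ) : ℂ) ∧
    ∀ k : ℤ, k ≠ 0 →
      fCoeff (kms ρ) k = (((ρ^2 - 1) * ρ^(k.natAbs - 1) / 4 : ℝ) : ℂ) :=
  kms_fourierCoeff_general (abs_lt.2 ⟨neg_one_lt_zero.trans hρ.1, hρ.2⟩)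
end
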